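/- For 1 ≤ p < 2 there exist positive constants c and C, depending only on p, such that c·n^{3/2 − 1/p} ≤ K_G(ℓ_p^n, ℓ_p^n) ≤ C·n^{3/2 − 1/p} for all n ∈ ℕ. -/

import Mathlib

/-!
Write `E = ℓ_pⁿ`, with unit vectors `e_k` and coordinate functionals `δ_k`.

*Upper bound.* Writing `w = u ∘ Aᵀ : E → E` through its rows gives
`projNorm w ≤ ∑ᵢ ‖δᵢ ∘ u‖`, the norm of `δᵢ ∘ u` being taken in `E**`, and this norm is at most
`n^{1/p - 1/2}` times the Euclidean norm of the row `(δᵢ(u δ_k))_k` (`bidual_le_l2`).  By Khintchine's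
inequality in `L¹` (`khintchine`) the sum of these Euclidean norms is at most a constant times the
average over signs `ε` of the `ℓ₁`-norm of `u(∑ ε_k δ_k)`.  Each such norm is at most
`n^{1 - 1/p} ‖∑ ε_k δ_k‖ ≤ n^{2 - 2/p}`, and `(1/p - 1/2) + (2 - 2/p) = 3/2 - 1/p`
(`projNorm_comp_le`).

*Lower bound.* Let `G` be an `n × n` matrix of signs of Euclidean operator norm at most `√(2n)`, cut
out of a Hadamard matrix of size a power of two (`exists_sign_matrix`).  As a bilinear form on `ℓ₁ⁿ`
it has norm at most `1`, on `ℓ₂ⁿ` norm at most `√(2n)`, so by complex interpolation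
its norm on `ℓ_pⁿ` is at most `√(2n)^{2 - 2/p}` (`interp`).  As a map `E* → E` it has norm
at most `n^{2/p - 1} √(2n)`.  Normalise to get `A` and `u`; the trace of `u ∘ Aᵀ` is `n²` divided by
the two normalising constants, a constant times `n^{3/2 - 1/p}`, and the trace is a lower bound
for the projective norm (`trace_le_projNorm`).
-/

open scoped BigOperators

/-- The projective tensor norm of the element of `X* ⊗ F` corresponding (via the canonical
identification, `X` finite dimensional) to the continuous linear map `u : X → F`. -/
noncomputable def projNorm {X F : Type*} [NormedAddCommGroup X] [NormedSpace ℝ X]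
    [NormedAddCommGroup F] [NormedSpace ℝ F] (u : X →L[ℝ] F) : ℝ :=
  sInf { r : ℝ | ∃ (k : ℕ) (η : Fin k → (X →L[ℝ] ℝ)) (f : Fin k → F),
    (∀ x, u x = ∑ i, η i x • f i) ∧ r = ∑ i, ‖η i‖ * ‖f i‖ }

/-- The Grothendieck constant `K_G(E,F)`.  An element of `E ⊗ F` is encoded as a map
`u : E* → F`, an element of `E* ⊗ F` as a map `E → F`, and `A ⊗ id_F` sends `u` to
`u ∘ Aᵀ`, where `Aᵀ = A.flip : E → E*`. -/
noncomputable def KG (E F : Type*) [NormedAddCommGroup E] [NormedSpace ℝ E]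
    [NormedAddCommGroup F] [NormedSpace ℝ F] : ℝ :=
  sSup { r : ℝ | ∃ (A : E →L[ℝ] (E →L[ℝ] ℝ)) (u : (E →L[ℝ] ℝ) →L[ℝ] F),
    ‖A‖ ≤ 1 ∧ ‖u‖ ≤ 1 ∧ r = projNorm (u.comp A.flip) }

/-- `ρ(E,F)`: the norm of the identity from `E ⊗̌ F` to `E ⊗̂ F`. -/
noncomputable def rho (E F : Type*) [NormedAddCommGroup E] [NormedSpace ℝ E]
    [NormedAddCommGroup F] [NormedSpace ℝ F] : ℝ :=
  sSup { r : ℝ | ∃ u : (E →L[ℝ] ℝ) →L[ℝ] F, ‖u‖ ≤ 1 ∧ r = projNorm u }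

/-- `A : E → E*` is non-negative: the corresponding tensor in `E* ⊗ E*` is a (finite) sum of
symmetric tensors `η ⊗ η`, i.e. lies in the convex hull of such tensors. -/
def IsNonnegMap {E : Type*} [NormedAddCommGroup E] [NormedSpace ℝ E]
    (A : E →L[ℝ] (E →L[ℝ] ℝ)) : Prop :=
  ∃ (k : ℕ) (η : Fin k → (E →L[ℝ] ℝ)), ∀ x, A x = ∑ i, η i x • η i

/-- A tensor `z ∈ E ⊗ E` (encoded as a map `E* → E`) is non-negative if it is a finite sum of
symmetric tensors `e ⊗ e`. -/
def IsNonnegTensor {E : Type*} [NormedAddCommGroup E] [NormedSpace ℝ E]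
    (z : (E →L[ℝ] ℝ) →L[ℝ] E) : Prop :=
  ∃ (k : ℕ) (e : Fin k → E), ∀ φ, z φ = ∑ i, φ (e i) • e i

/-- The positive Grothendieck constant `K_G⁺(E,F)`. -/
noncomputable def KGpos (E F : Type*) [NormedAddCommGroup E] [NormedSpace ℝ E]
    [NormedAddCommGroup F] [NormedSpace ℝ F] : ℝ :=
  sSup { r : ℝ | ∃ (A : E →L[ℝ] (E →L[ℝ] ℝ)) (u : (E →L[ℝ] ℝ) →L[ℝ] F),
    IsNonnegMap A ∧ ‖A‖ ≤ 1 ∧ ‖u‖ ≤ 1 ∧ r = projNorm (u.comp A.flip) }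

/-- The factorization constant `f(X,E)` of `X` through `E`. -/
noncomputable def factConst (X E : Type*) [NormedAddCommGroup X] [NormedSpace ℝ X]
    [NormedAddCommGroup E] [NormedSpace ℝ E] : ℝ :=
  sInf { r : ℝ | ∃ (u : X →L[ℝ] E) (v : E →L[ℝ] X),
    v.comp u = ContinuousLinearMap.id ℝ X ∧ r = ‖u‖ * ‖v‖ }

/-- `γ(E) = sup { tr(BA) : A ≥ 0, B ≥ 0, ‖A‖ ≤ 1, ‖B‖ ≤ 1 }`. -/
noncomputable def gammaConst (E : Type*) [NormedAddCommGroup E] [NormedSpace ℝ E] : ℝ :=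
  sSup { r : ℝ | ∃ (A : E →L[ℝ] (E →L[ℝ] ℝ)) (B : (E →L[ℝ] ℝ) →L[ℝ] E),
    IsNonnegMap A ∧ IsNonnegTensor B ∧ ‖A‖ ≤ 1 ∧ ‖B‖ ≤ 1 ∧
    r = LinearMap.trace ℝ E ((B.comp A : E →L[ℝ] E) : E →ₗ[ℝ] E) }

/-- `ρ⁺(E)`: as `ρ(E,E)` but the supremum is restricted to non-negative tensors. -/
noncomputable def rhoPlus (E : Type*) [NormedAddCommGroup E] [NormedSpace ℝ E] : ℝ :=
  sSup { r : ℝ | ∃ z : (E →L[ℝ] ℝ) →L[ℝ] E,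
    IsNonnegTensor z ∧ ‖z‖ ≤ 1 ∧ r = projNorm z }

/-- `X` has (Rademacher) cotype `q`. -/
def HasCotype (X : Type*) [NormedAddCommGroup X] [NormedSpace ℝ X] (q : ℝ) : Prop :=
  ∃ C > 0, ∀ (n : ℕ) (x : Fin n → X),
    (∑ i, ‖x i‖ ^ q) ^ (1/q) ≤
      C * (((2 : ℝ) ^ n)⁻¹ *
        ∑ ε : Fin n → Bool, ‖∑ i, (if ε i then (1:ℝ) else -1) • x i‖ ^ 2) ^ (1/2 : ℝ)

open scoped ENNReal

/-! ### Sign matrices, interpolation and Khintchine's inequality -/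

/-- Sylvester's construction of Hadamard matrices `[[H, H], [H, -H]]`.  The isometry property is
stated for complex vectors, as needed for interpolation. -/
theorem exists_sign_matrix_pow (k : ℕ) : ∃ (ι : Type) (_ : Fintype ι) (H : ι → ι → ℝ),
    Fintype.card ι = 2 ^ k ∧ (∀ i j, |H i j| = 1) ∧
    ∀ z : ι → ℂ, ∑ i, ‖∑ j, (H i j : ℂ) * z j‖ ^ 2 = 2 ^ k * ∑ j, ‖z j‖ ^ 2 := by
  induction k with
  | zero => exact ⟨Unit, inferInstance, fun _ _ => 1, by simp, by simp, by simp⟩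
  | succ k ih =>
    obtain ⟨ι, _, H, hcard, hH, hz⟩ := ih
    refine ⟨ι ⊕ ι, inferInstance, Sum.elim (fun i => Sum.elim (H i) (H i))
      (fun i => Sum.elim (H i) (fun j => - H i j)), ?_, ?_, ?_⟩
    · simp [hcard, pow_succ]; ring
    · rintro (i | i) (j | j) <;> simp [hH]
    · intro z
      have h1 := hz (fun j => z (Sum.inl j))
      have h2 := hz (fun j => z (Sum.inr j))
      simp only [Fintype.sum_sum_type, Sum.elim_inl, Sum.elim_inr, Complex.ofReal_neg, neg_mul,
        Finset.sum_neg_distrib]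
      rw [← Finset.sum_add_distrib]
      have h3 : (2 : ℝ) ^ (k + 1) * (∑ j, ‖z (Sum.inl j)‖ ^ 2 + ∑ j, ‖z (Sum.inr j)‖ ^ 2) =
          ∑ i, 2 * (‖∑ j, (H i j : ℂ) * z (Sum.inl j)‖ ^ 2
            + ‖∑ j, (H i j : ℂ) * z (Sum.inr j)‖ ^ 2) := by
        rw [← Finset.mul_sum, Finset.sum_add_distrib, h1, h2]; ring
      rw [h3]
      refine Finset.sum_congr rfl fun i _ => ?_
      have := parallelogram_law_with_norm ℝ (∑ j, (H i j : ℂ) * z (Sum.inl j))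
        (∑ j, (H i j : ℂ) * z (Sum.inr j))
      rw [← sub_eq_add_neg]
      nlinarith

/-- Sign matrices of every size `n` with Euclidean operator norm at most `√(2n)`: a submatrix of a
Hadamard matrix of size `2 ^ k`, where `n ≤ 2 ^ k ≤ 2n`. -/
theorem exists_sign_matrix (n : ℕ) (hn : 1 ≤ n) : ∃ G : Fin n → Fin n → ℝ,
    (∀ i j, |G i j| = 1) ∧
    ∀ z : Fin n → ℂ, ∑ i, ‖∑ j, (G i j : ℂ) * z j‖ ^ 2 ≤ 2 * n * ∑ j, ‖z j‖ ^ 2 := by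
  obtain ⟨k, hk1, hk2⟩ : ∃ k, n ≤ 2 ^ k ∧ 2 ^ k ≤ 2 * n := by
    refine ⟨Nat.log 2 n + 1, (Nat.lt_pow_succ_log_self (by norm_num) n).le, ?_⟩
    have := Nat.pow_log_le_self 2 (x := n) (by omega)
    rw [pow_succ]; omega
  obtain ⟨ι, _, H, hcard, hH, hz⟩ := exists_sign_matrix_pow k
  obtain ⟨e⟩ : Nonempty (Fin n ↪ ι) :=
    Function.Embedding.nonempty_of_card_le (by simpa [hcard] using hk1)
  refine ⟨fun i j => H (e i) (e j), fun i j => hH _ _, fun z => ?_⟩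
  classical
  -- extend `z` by zero along the embedding
  have hext : ∀ (g : ι → ℂ → ℂ), (∀ a, g a 0 = 0) →
      ∑ a, g a (Function.extend e z 0 a) = ∑ j, g (e j) (z j) := by
    intro g hg
    rw [← Finset.sum_subset (Finset.subset_univ (Finset.univ.map e))]
    · simp [e.injective.extend_apply]
    · intro a _ ha
      rw [Function.extend_apply', Pi.zero_apply, hg]
      simpa using ha
  have h := hz (Function.extend e z 0)
  have hn2 : ∑ a, ‖Function.extend e z 0 a‖ ^ 2 = ∑ j, ‖z j‖ ^ 2 := by
    have := hext (fun _ w => ((‖w‖ ^ 2 : ℝ) : ℂ)) (by simp)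
    exact_mod_cast this
  rw [hn2] at h
  simp_rw [fun i => hext (fun a w => (H i a : ℂ) * w) (by simp)] at h
  calc ∑ i, ‖∑ j, (H (e i) (e j) : ℂ) * z j‖ ^ 2
      = ∑ a ∈ Finset.univ.map e, ‖∑ j, (H a (e j) : ℂ) * z j‖ ^ 2 := by simp
    _ ≤ ∑ a, ‖∑ j, (H a (e j) : ℂ) * z j‖ ^ 2 :=
        Finset.sum_le_sum_of_subset_of_nonneg (Finset.subset_univ _) (fun _ _ _ => by positivity)
    _ = 2 ^ k * ∑ j, ‖z j‖ ^ 2 := h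
    _ ≤ _ := by
        gcongr
        exact_mod_cast hk2

/-- Riesz–Thorin interpolation for a bilinear form, between `ℓ₁ × ℓ₁` (norm at most `1`, as the
entries are bounded by `1`) and `ℓ₂ × ℓ₂` (norm at most `K`).  The three lines theorem is applied to
the form evaluated at the vectors `sgn(xᵢ) |xᵢ|^{p(1 - z/2)}`, which are `xᵢ` at `z = 2 - 2/p`. -/
theorem interp {n : ℕ} (G : Fin n → Fin n → ℝ) (hG : ∀ i j, |G i j| ≤ 1) (K : ℝ)
    (hK : ∀ x y : Fin n → ℂ, ∑ i, ‖x i‖ ^ 2 = 1 → ∑ i, ‖y i‖ ^ 2 = 1 →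
      ‖∑ i, x i * ∑ j, (G i j : ℂ) * y j‖ ≤ K)
    (p : ℝ) (hp1 : 1 ≤ p) (hp2 : p < 2) (x y : Fin n → ℝ)
    (hx : ∑ i, |x i| ^ p = 1) (hy : ∑ i, |y i| ^ p = 1) :
    |∑ i, x i * ∑ j, G i j * y j| ≤ K ^ (2 - 2 / p) := by
  have hp0 : 0 < p := by linarith
  -- `t |t|^{w - 1}` instead of `sgn(t) |t|^w`: it vanishes identically in `z` when `t = 0`.
  let s : ℝ → ℂ → ℂ := fun t z => (t : ℂ) * ((|t| : ℝ) : ℂ) ^ ((p : ℂ) * (1 - z / 2) - 1)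
  have hs_diff : ∀ t, Differentiable ℂ (s t) := by
    intro t
    by_cases ht : t = 0
    · simp [s, ht]
    · refine Differentiable.const_mul ?_ _
      refine Differentiable.const_cpow (by fun_prop) (Or.inl ?_)
      exact_mod_cast abs_ne_zero.2 ht
  have hs_norm : ∀ t z, z.re ≤ 1 → ‖s t z‖ = |t| ^ (p * (1 - z.re / 2)) := by
    intro t z hz
    have hpos : 0 < p * (1 - z.re / 2) := by apply mul_pos hp0; linarith
    by_cases ht : t = 0
    · simp [s, ht, Real.zero_rpow hpos.ne']
    · have ht' : 0 < |t| := abs_pos.2 ht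
      simp only [s, norm_mul, Complex.norm_real, Real.norm_eq_abs]
      rw [Complex.norm_cpow_eq_rpow_re_of_pos ht']
      have : ((p : ℂ) * (1 - z / 2) - 1).re = p * (1 - z.re / 2) - 1 := by simp
      rw [this, Real.rpow_sub_one ht'.ne']
      field_simp
  have hs_val : ∀ t, s t ((2 - 2 / p : ℝ) : ℂ) = t := by
    intro t
    have : (p : ℂ) * (1 - ((2 - 2 / p : ℝ) : ℂ) / 2) - 1 = 0 := by
      have : (p : ℂ) ≠ 0 := by exact_mod_cast hp0.ne'
      push_cast
      field_simp
      ring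
    simp only [s, this, Complex.cpow_zero, mul_one]
  have hle1 : ∀ x : Fin n → ℝ, ∑ i, |x i| ^ p = 1 → ∀ i, |x i| ≤ 1 := by
    intro x hx i
    have h1 : |x i| ^ p ≤ 1 := hx ▸ Finset.single_le_sum (f := fun i => |x i| ^ p)
      (fun _ _ => by positivity) (Finset.mem_univ i)
    by_contra! h
    exact absurd h1 (not_le.2 (Real.one_lt_rpow h hp0))
  have hs_le : ∀ x : Fin n → ℝ, ∑ i, |x i| ^ p = 1 → ∀ i z, z.re ≤ 1 → ‖s (x i) z‖ ≤ 1 := by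
    intro x hx i z hz
    rw [hs_norm _ _ hz]
    refine Real.rpow_le_one (abs_nonneg _) (hle1 x hx i) ?_
    apply mul_nonneg hp0.le; linarith
  let f : ℂ → ℂ := fun z => ∑ i, s (x i) z * ∑ j, (G i j : ℂ) * s (y j) z
  have hf_norm : ∀ z, ‖f z‖ ≤ ∑ i, ‖s (x i) z‖ * ∑ j, ‖s (y j) z‖ := by
    intro z
    refine (norm_sum_le _ _).trans (Finset.sum_le_sum fun i _ => ?_)
    rw [norm_mul]
    gcongr
    refine (norm_sum_le _ _).trans (Finset.sum_le_sum fun j _ => ?_)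
    rw [norm_mul, Complex.norm_real, Real.norm_eq_abs]
    exact mul_le_of_le_one_left (norm_nonneg _) (hG i j)
  have hf_diff : Differentiable ℂ f := by
    refine Differentiable.fun_sum fun i _ => (hs_diff _).mul ?_
    exact Differentiable.fun_sum fun j _ => (hs_diff _).const_mul _
  have h0 : (0 : ℝ) ≤ 2 - 2 / p := by
    have : 2 / p ≤ 2 := by rw [div_le_iff₀ hp0]; linarith
    linarith
  have h1 : 2 - 2 / p ≤ (1 : ℝ) := by
    have : 1 ≤ 2 / p := by rw [le_div_iff₀ hp0]; linarith
    linarith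
  have key := Complex.HadamardThreeLines.norm_le_interp_of_mem_verticalClosedStrip₀₁' f
    (z := ((2 - 2 / p : ℝ) : ℂ)) (a := 1) (b := K) ?_ hf_diff.diffContOnCl ?_ ?_ ?_
  · have hfv : f ((2 - 2 / p : ℝ) : ℂ) = ((∑ i, x i * ∑ j, G i j * y j : ℝ) : ℂ) := by
      simp only [f, hs_val]; push_cast; rfl
    rw [hfv, Complex.norm_real, Real.norm_eq_abs, Real.one_rpow, one_mul, Complex.ofReal_re] at key
    exact key
  · simp only [Complex.HadamardThreeLines.verticalClosedStrip, Set.mem_preimage, Complex.ofReal_re]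
    exact ⟨h0, h1⟩
  · refine ⟨∑ _i : Fin n, ∑ _j : Fin n, (1 : ℝ), ?_⟩
    rintro _ ⟨z, hz, rfl⟩
    refine (hf_norm z).trans (Finset.sum_le_sum fun i _ => ?_)
    refine (mul_le_of_le_one_left (Finset.sum_nonneg fun _ _ => norm_nonneg _)
      (hs_le x hx i z hz.2)).trans (Finset.sum_le_sum fun j _ => hs_le y hy j z hz.2)
  · intro z hz
    have hz : z.re = 0 := hz
    refine (hf_norm z).trans ?_
    rw [← Finset.sum_mul]
    simp only [hs_norm _ z (by rw [hz]; norm_num), hz]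
    simp [hx, hy]
  · intro z hz
    have hz : z.re = 1 := hz
    have hsq : ∀ t, ‖s t z‖ ^ 2 = |t| ^ p := by
      intro t
      rw [hs_norm _ z hz.le, hz, ← Real.rpow_natCast, ← Real.rpow_mul (abs_nonneg _)]
      congr 1; push_cast; ring
    apply hK <;> simp only [hsq] <;> assumption

/-- Second moment, and the bound on the fourth moment, of a Rademacher sum `∑ εᵢ aᵢ`, before
division by the number `2 ^ n` of signs. -/
theorem sign_moments (n : ℕ) (a : Fin n → ℝ) :
    ∑ ε : Fin n → Bool, (∑ i, (if ε i then (1 : ℝ) else -1) * a i) ^ 2 = 2 ^ n * ∑ i, a i ^ 2 ∧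
    ∑ ε : Fin n → Bool, (∑ i, (if ε i then (1 : ℝ) else -1) * a i) ^ 4
      ≤ 3 * (2 ^ n * (∑ i, a i ^ 2) ^ 2) := by
  induction n with
  | zero => simp
  | succ n ih =>
    obtain ⟨h2, h4⟩ := ih (fun i => a i.succ)
    set σ := ∑ i : Fin n, a i.succ ^ 2
    have e : ∀ F : ℝ → ℝ, ∑ ε : Fin (n + 1) → Bool, F (∑ i, (if ε i then (1 : ℝ) else -1) * a i)
        = ∑ ε : Fin n → Bool, (F (a 0 + ∑ i, (if ε i then (1 : ℝ) else -1) * a i.succ)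
          + F (- a 0 + ∑ i, (if ε i then (1 : ℝ) else -1) * a i.succ)) := by
      intro F
      rw [← (Fin.consEquiv fun _ => Bool).sum_comp, Fintype.sum_prod_type]
      simp [Fin.consEquiv, Fin.sum_univ_succ, Finset.sum_add_distrib]
    rw [e (· ^ 2), e (· ^ 4), Fin.sum_univ_succ]
    have c : ∑ _ε : Fin n → Bool, (1 : ℝ) = 2 ^ n := by simp
    constructor
    · calc _ = ∑ ε : Fin n → Bool, (2 * a 0 ^ 2 * 1
            + 2 * (∑ i, (if ε i then (1 : ℝ) else -1) * a i.succ) ^ 2) :=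
          Finset.sum_congr rfl fun ε _ => by ring
        _ = _ := by
          rw [Finset.sum_add_distrib, ← Finset.mul_sum, ← Finset.mul_sum, c, h2]; ring
    · calc _ = ∑ ε : Fin n → Bool, (2 * a 0 ^ 4 * 1
            + 12 * a 0 ^ 2 * (∑ i, (if ε i then (1 : ℝ) else -1) * a i.succ) ^ 2
            + 2 * (∑ i, (if ε i then (1 : ℝ) else -1) * a i.succ) ^ 4) :=
          Finset.sum_congr rfl fun ε _ => by ring
        _ = 2 * a 0 ^ 4 * 2 ^ n + 12 * a 0 ^ 2 * (2 ^ n * σ) + 2 *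
            ∑ ε : Fin n → Bool, (∑ i, (if ε i then (1 : ℝ) else -1) * a i.succ) ^ 4 := by
          rw [Finset.sum_add_distrib, Finset.sum_add_distrib, ← Finset.mul_sum, ← Finset.mul_sum,
            ← Finset.mul_sum, c, h2]
        _ ≤ _ := by
          have : (0 : ℝ) ≤ 2 ^ n * a 0 ^ 4 := by positivity
          change _ ≤ 3 * (2 ^ (n + 1) * (a 0 ^ 2 + σ) ^ 2)
          rw [pow_succ (2 : ℝ) n]
          nlinarith

/-- Khintchine's inequality in `L¹`, with constant `3`, deduced from the second and fourth moments
through a pointwise lower bound of `|s|` by a combination of `s²` and `s⁴`. -/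
theorem khintchine (n : ℕ) (a : Fin n → ℝ) :
    √(∑ i, a i ^ 2) ≤ 3 * ((2 ^ n)⁻¹ *
      ∑ ε : Fin n → Bool, |∑ i, (if ε i then (1 : ℝ) else -1) * a i|) := by
  obtain ⟨h2, h4⟩ := sign_moments n a
  set S : (Fin n → Bool) → ℝ := fun ε => ∑ i, (if ε i then (1 : ℝ) else -1) * a i with hS
  set σ := √(∑ i, a i ^ 2)
  have hσ0 : 0 ≤ σ := Real.sqrt_nonneg _
  have hσ : ∑ i, a i ^ 2 = σ ^ 2 := (Real.sq_sqrt (Finset.sum_nonneg fun _ _ => sq_nonneg _)).symm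
  rw [hσ] at h2 h4
  change ∑ ε, S ε ^ 2 = _ at h2
  change ∑ ε, S ε ^ 4 ≤ _ at h4
  change σ ≤ 3 * ((2 ^ n)⁻¹ * ∑ ε, |S ε|)
  rcases hσ0.eq_or_lt with h | h
  · rw [← h]; positivity
  -- This is `|s| ≥ t (x² - x⁴ / 4)` with `x = s / t` and `t = 2σ`.
  have hpt : ∀ s : ℝ, s ^ 2 * (16 * σ ^ 2) - s ^ 4 ≤ 32 * σ ^ 3 * |s| := by
    intro s
    rw [← sq_abs s, show s ^ 4 = |s| ^ 4 by rw [pow_abs, abs_of_nonneg (by positivity)]]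
    have hs := abs_nonneg s
    set r := |s|
    have : 0 ≤ r ^ 3 - 16 * σ ^ 2 * r + 32 * σ ^ 3 := by
      nlinarith [mul_nonneg hs (sq_nonneg (r - 9/4 * σ)), mul_nonneg hσ0 (sq_nonneg (r - 9/4 * σ)),
        pow_pos h 3]
    nlinarith [mul_nonneg hs this]
  have hsum := Finset.sum_le_sum fun ε (_ : ε ∈ Finset.univ) => hpt (S ε)
  rw [Finset.sum_sub_distrib, ← Finset.sum_mul, ← Finset.mul_sum, h2] at hsum
  have h3 : (2 : ℝ) ^ n * 13 * σ ^ 4 ≤ 32 * σ ^ 3 * ∑ ε, |S ε| := by nlinarith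
  have h5 : (2 : ℝ) ^ n * 13 * σ ≤ 32 * ∑ ε, |S ε| := by
    have : 0 < σ ^ 3 := by positivity
    refine le_of_mul_le_mul_left ?_ this
    nlinarith
  have hN : (0 : ℝ) < 2 ^ n := by positivity
  have h6 : 0 ≤ ∑ ε, |S ε| := Finset.sum_nonneg fun _ _ => abs_nonneg _
  rw [← mul_assoc, mul_comm 3, mul_assoc, le_inv_mul_iff₀ hN]
  nlinarith

/-! ### The space `ℓ_pⁿ` and its dual -/

/-- The space `ℓ_pⁿ` for a real exponent `p`. -/
abbrev Ell (p : ℝ) (n : ℕ) : Type := PiLp (ENNReal.ofReal p) fun _ : Fin n => ℝ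


theorem lp_norm {p : ℝ} {n : ℕ} (hp : 1 ≤ p) (x : Ell p n) :
    ‖x‖ = (∑ i, |x i| ^ p) ^ (1 / p) := by
  have h : (ENNReal.ofReal p).toReal = p := ENNReal.toReal_ofReal (by linarith)
  rw [PiLp.norm_eq_sum (by rw [h]; linarith), h]
  simp only [Real.norm_eq_abs]

theorem lp_norm_rpow {p : ℝ} {n : ℕ} [Fact (1 ≤ ENNReal.ofReal p)] (hp : 1 ≤ p) (x : Ell p n) :
    ‖x‖ ^ p = ∑ i, |x i| ^ p := by
  rw [lp_norm hp, one_div, Real.rpow_inv_rpow (Finset.sum_nonneg fun _ _ => by positivity)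
    (by linarith)]

/-- Power mean inequality between the exponents `1` and `p`. -/
theorem l1_le_lp {p : ℝ} {n : ℕ} [Fact (1 ≤ ENNReal.ofReal p)] (hp : 1 ≤ p) (x : Ell p n) :
    ∑ i, |x i| ≤ (n : ℝ) ^ (1 - 1 / p) * ‖x‖ := by
  have hp0 : 0 < p := by linarith
  have h := Real.rpow_sum_le_const_mul_sum_rpow Finset.univ (fun i => x i) hp
  rw [← lp_norm_rpow hp, Finset.card_univ, Fintype.card_fin] at h
  have h2 := Real.rpow_le_rpow (by positivity) h (z := 1 / p) (by positivity)
  rw [Real.mul_rpow (by positivity) (by positivity), one_div, Real.rpow_rpow_inv (by positivity)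
    hp0.ne', Real.rpow_rpow_inv (by positivity) hp0.ne', ← Real.rpow_mul (by positivity)] at h2
  convert h2 using 3
  field_simp

/-- Power mean inequality between the exponents `p` and `2`. -/
theorem lp_le_l2 {p : ℝ} {n : ℕ} [Fact (1 ≤ ENNReal.ofReal p)] (hp : 1 ≤ p) (hp2 : p < 2)
    (x : Ell p n) :
    ‖x‖ ≤ (n : ℝ) ^ (1 / p - 1 / 2) * √(∑ i, x i ^ 2) := by
  have hp0 : 0 < p := by linarith
  have h := Real.rpow_sum_le_const_mul_sum_rpow_of_nonneg Finset.univ (f := fun i => |x i| ^ p)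
    (p := 2 / p) (by rw [le_div_iff₀ hp0]; linarith) (fun _ _ => by positivity)
  have e : ∀ i, (|x i| ^ p) ^ (2 / p) = x i ^ 2 := by
    intro i
    rw [← Real.rpow_mul (abs_nonneg _), mul_div_cancel₀ _ hp0.ne', Real.rpow_two, sq_abs]
  simp only [e] at h
  rw [← lp_norm_rpow hp, Finset.card_univ, Fintype.card_fin, ← Real.rpow_mul (norm_nonneg _),
    mul_div_cancel₀ _ hp0.ne', Real.rpow_two] at h
  have h2 := Real.sqrt_le_sqrt h
  rw [Real.sqrt_sq (norm_nonneg _), Real.sqrt_mul (by positivity), Real.sqrt_eq_rpow,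
    ← Real.rpow_mul (by positivity)] at h2
  convert h2 using 3
  field_simp

theorem lp_expand {p : ℝ} {n : ℕ} (x : Ell p n) :
    x = ∑ k, x k • (PiLp.single (ENNReal.ofReal p) k 1 : Ell p n) := by
  ext i
  simp [Pi.single_apply]

/-- The Euclidean norm of the coefficients of a functional is controlled by its norm in `E*`. -/
theorem dual_l2_le {p : ℝ} {n : ℕ} [Fact (1 ≤ ENNReal.ofReal p)] (hp : 1 ≤ p) (hp2 : p < 2)
    (φ : Ell p n →L[ℝ] ℝ) :
    √(∑ k, φ (PiLp.single (ENNReal.ofReal p) k 1) ^ 2) ≤ (n : ℝ) ^ (1 / p - 1 / 2) * ‖φ‖ := by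
  set a : Fin n → ℝ := fun k => φ (PiLp.single (ENNReal.ofReal p) k 1)
  change √(∑ k, a k ^ 2) ≤ _
  set σ := √(∑ k, a k ^ 2)
  have hσ : ∑ k, a k ^ 2 = σ ^ 2 := (Real.sq_sqrt (Finset.sum_nonneg fun _ _ => sq_nonneg _)).symm
  have hσ0 : 0 ≤ σ := Real.sqrt_nonneg _
  rcases hσ0.eq_or_lt with h | h
  · rw [← h]; positivity
  let x : Ell p n := WithLp.toLp _ a
  have h1 : φ x = σ ^ 2 := by
    rw [lp_expand x, map_sum, ← hσ]
    refine Finset.sum_congr rfl fun k _ => ?_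
    rw [map_smul, smul_eq_mul, sq]
  have h2 : ‖x‖ ≤ (n : ℝ) ^ (1 / p - 1 / 2) * σ := lp_le_l2 hp hp2 x
  have h3 : σ ^ 2 ≤ ‖φ‖ * ((n : ℝ) ^ (1 / p - 1 / 2) * σ) := by
    rw [← h1]
    exact (le_abs_self _).trans ((φ.le_opNorm x).trans (by gcongr))
  refine le_of_mul_le_mul_right ?_ h
  nlinarith

/-- An element of `E**` is evaluation at the vector of its values on the coordinate functionals,
so its norm is controlled by the Euclidean norm of that vector. -/
theorem bidual_le_l2 {p : ℝ} {n : ℕ} [Fact (1 ≤ ENNReal.ofReal p)] (hp : 1 ≤ p) (hp2 : p < 2)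
    (r : (Ell p n →L[ℝ] ℝ) →L[ℝ] ℝ) :
    ‖r‖ ≤ (n : ℝ) ^ (1 / p - 1 / 2) *
      √(∑ k, r (PiLp.proj (ENNReal.ofReal p) (fun _ : Fin n => ℝ) k) ^ 2) := by
  refine r.opNorm_le_bound (by positivity) fun φ => ?_
  let x : Ell p n :=
    WithLp.toLp _ fun k => r (PiLp.proj (ENNReal.ofReal p) (fun _ : Fin n => ℝ) k)
  have h1 : φ = ∑ k, φ (PiLp.single (ENNReal.ofReal p) k 1) •
      PiLp.proj (𝕜 := ℝ) (ENNReal.ofReal p) (fun _ : Fin n => ℝ) k := by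
    ext y
    conv_lhs => rw [lp_expand y, map_sum]
    simp [mul_comm]
  have h2 : r φ = φ x := by
    rw [lp_expand x, map_sum]
    conv_lhs => rw [h1, map_sum]
    simp [x, mul_comm]
  rw [h2]
  refine (φ.le_opNorm x).trans ?_
  rw [mul_comm]
  gcongr
  exact lp_le_l2 hp hp2 x

/-- The trace of `w` is at most its projective norm, by pairing with the identity. -/
theorem trace_le_projNorm {p : ℝ} {n : ℕ} [Fact (1 ≤ ENNReal.ofReal p)] (w : Ell p n →L[ℝ] Ell p n) :
    ∑ i, w (PiLp.single (ENNReal.ofReal p) i 1) i ≤ projNorm w := by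
  refine le_csInf ⟨_, n, fun i => (PiLp.proj (𝕜 := ℝ) (ENNReal.ofReal p) (fun _ : Fin n => ℝ) i).comp w,
    fun i => PiLp.single (ENNReal.ofReal p) i 1, fun x => lp_expand (w x), rfl⟩ ?_
  rintro _ ⟨k, η, f, hw, rfl⟩
  calc ∑ i, w (PiLp.single (ENNReal.ofReal p) i 1) i
      = ∑ i, ∑ j, η j (PiLp.single (ENNReal.ofReal p) i 1) * f j i := by
        refine Finset.sum_congr rfl fun i _ => ?_
        simp [hw]
    _ = ∑ j, η j (f j) := by
        rw [Finset.sum_comm]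
        refine Finset.sum_congr rfl fun j _ => ?_
        conv_rhs => rw [lp_expand (f j), map_sum]
        simp [mul_comm]
    _ ≤ ∑ j, ‖η j‖ * ‖f j‖ :=
        Finset.sum_le_sum fun j _ => (le_abs_self _).trans ((η j).le_opNorm _)

/-- The bound given by the representation `w = ∑ᵢ (δᵢ ∘ w) ⊗ eᵢ`. -/
theorem projNorm_le_rows {p : ℝ} {n : ℕ} [Fact (1 ≤ ENNReal.ofReal p)] (w : Ell p n →L[ℝ] Ell p n) :
    projNorm w ≤
      ∑ i, ‖(PiLp.proj (𝕜 := ℝ) (ENNReal.ofReal p) (fun _ : Fin n => ℝ) i).comp w‖ := by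
  refine csInf_le ⟨0, ?_⟩ ⟨n, fun i =>
    (PiLp.proj (𝕜 := ℝ) (ENNReal.ofReal p) (fun _ : Fin n => ℝ) i).comp w,
    fun i => PiLp.single (ENNReal.ofReal p) i 1, fun x => lp_expand (w x), ?_⟩
  · rintro _ ⟨k, η, f, -, rfl⟩
    positivity
  · simp

/-! ### The two estimates -/

/-- The upper estimate: rows, Khintchine's inequality, and power means. -/
theorem projNorm_comp_le {p : ℝ} {n : ℕ} [Fact (1 ≤ ENNReal.ofReal p)] (hp : 1 ≤ p) (hp2 : p < 2) (hn : 1 ≤ n)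
    (A : Ell p n →L[ℝ] (Ell p n →L[ℝ] ℝ))
    (u : (Ell p n →L[ℝ] ℝ) →L[ℝ] Ell p n) (hA : ‖A‖ ≤ 1) (hu : ‖u‖ ≤ 1) :
    projNorm (u.comp A.flip) ≤ 3 * (n : ℝ) ^ (3 / 2 - 1 / p) := by
  have hn0 : (0 : ℝ) < n := by exact_mod_cast hn
  let δ : Fin n → (Ell p n →L[ℝ] ℝ) :=
    fun k => PiLp.proj (𝕜 := ℝ) (ENNReal.ofReal p) (fun _ : Fin n => ℝ) k
  have hrow : ∀ i, ‖(δ i).comp (u.comp A.flip)‖ ≤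
      (n : ℝ) ^ (1 / p - 1 / 2) * √(∑ k, (u (δ k) i) ^ 2) := by
    intro i
    rw [← ContinuousLinearMap.comp_assoc]
    refine (ContinuousLinearMap.opNorm_comp_le _ _).trans ?_
    rw [ContinuousLinearMap.opNorm_flip]
    exact (mul_le_of_le_one_right (norm_nonneg _) hA).trans (bidual_le_l2 hp hp2 _)
  have hsign : ∀ ε : Fin n → Bool,
      ∑ i, |∑ k, (if ε k then (1 : ℝ) else -1) * u (δ k) i| ≤
        (n : ℝ) ^ (1 - 1 / p) * (n : ℝ) ^ (1 - 1 / p) := by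
    intro ε
    set φ := ∑ k, (if ε k then (1 : ℝ) else -1) • δ k with hφ
    have h1 : ‖φ‖ ≤ (n : ℝ) ^ (1 - 1 / p) := by
      refine φ.opNorm_le_bound (by positivity) fun x => le_trans ?_ (l1_le_lp hp x)
      rw [hφ, sum_apply]
      refine (norm_sum_le _ _).trans (Finset.sum_le_sum fun k _ => ?_)
      rw [smul_apply, norm_smul]
      split_ifs <;> simp [δ]
    have h2 : ∀ i, u φ i = ∑ k, (if ε k then (1 : ℝ) else -1) * u (δ k) i := by
      intro i
      simp only [hφ, map_sum, map_smul, WithLp.ofLp_sum, Finset.sum_apply, PiLp.smul_apply,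
        smul_eq_mul]
    simp only [← h2]
    refine (l1_le_lp hp (u φ)).trans ?_
    gcongr
    exact (u.le_opNorm φ).trans ((mul_le_of_le_one_left (norm_nonneg _) hu).trans h1)
  calc projNorm (u.comp A.flip) ≤ ∑ i, ‖(δ i).comp (u.comp A.flip)‖ := projNorm_le_rows _
    _ ≤ ∑ i, (n : ℝ) ^ (1 / p - 1 / 2) * (3 * ((2 ^ n)⁻¹ *
          ∑ ε : Fin n → Bool, |∑ k, (if ε k then (1 : ℝ) else -1) * u (δ k) i|)) := by
        refine Finset.sum_le_sum fun i _ => (hrow i).trans ?_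
        gcongr
        exact khintchine n _
    _ = (n : ℝ) ^ (1 / p - 1 / 2) * (3 * ((2 ^ n)⁻¹ *
          ∑ ε : Fin n → Bool, ∑ i, |∑ k, (if ε k then (1 : ℝ) else -1) * u (δ k) i|)) := by
        rw [← Finset.mul_sum, ← Finset.mul_sum, ← Finset.mul_sum, Finset.sum_comm]
    _ ≤ (n : ℝ) ^ (1 / p - 1 / 2) * (3 * ((2 ^ n)⁻¹ *
          ∑ _ε : Fin n → Bool, (n : ℝ) ^ (1 - 1 / p) * (n : ℝ) ^ (1 - 1 / p))) := by
        gcongr with ε _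
        exact hsign ε
    _ = 3 * ((n : ℝ) ^ (1 / p - 1 / 2) * ((n : ℝ) ^ (1 - 1 / p) * (n : ℝ) ^ (1 - 1 / p))) := by
        rw [Finset.sum_const, Finset.card_univ]
        simp
        ring
    _ = 3 * (n : ℝ) ^ (3 / 2 - 1 / p) := by
        rw [← Real.rpow_add hn0, ← Real.rpow_add hn0]
        congr 2; ring

/-- A sign matrix of Euclidean operator norm at most `√(2n)`, as a bilinear form on `ℓ_pⁿ`. -/
theorem interp_lp {p : ℝ} {n : ℕ} [Fact (1 ≤ ENNReal.ofReal p)] (hp : 1 ≤ p) (hp2 : p < 2) (G : Fin n → Fin n → ℝ) (hG : ∀ i j, |G i j| = 1)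
    (hG2 : ∀ z : Fin n → ℂ, ∑ i, ‖∑ j, (G i j : ℂ) * z j‖ ^ 2 ≤ 2 * n * ∑ j, ‖z j‖ ^ 2)
    (x y : Ell p n) :
    |∑ i, x i * ∑ j, G i j * y j| ≤ √(2 * n) ^ (2 - 2 / p) * ‖x‖ * ‖y‖ := by
  rcases eq_or_ne x 0 with rfl | hx
  · simp
  rcases eq_or_ne y 0 with rfl | hy
  · simp
  have hx' := norm_pos_iff.2 hx
  have hy' := norm_pos_iff.2 hy
  have hunit : ∀ x : Ell p n, x ≠ 0 →
      ∑ i, |‖x‖⁻¹ * x i| ^ p = 1 := by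
    intro x hx
    have h := lp_norm_rpow hp (‖x‖⁻¹ • x)
    rw [norm_smul, norm_inv, norm_norm, inv_mul_cancel₀ (norm_ne_zero_iff.2 hx),
      Real.one_rpow] at h
    simpa using h.symm
  have h := interp G (fun i j => (hG i j).le) (√(2 * n)) ?_ p hp hp2 _ _ (hunit x hx) (hunit y hy)
  · have e : ∑ i, ‖x‖⁻¹ * x i * ∑ j, G i j * (‖y‖⁻¹ * y j) =
        (‖x‖ * ‖y‖)⁻¹ * ∑ i, x i * ∑ j, G i j * y j := by
      rw [Finset.mul_sum]
      refine Finset.sum_congr rfl fun i _ => ?_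
      rw [Finset.mul_sum, Finset.mul_sum, Finset.mul_sum]
      refine Finset.sum_congr rfl fun j _ => ?_
      rw [mul_inv]; ring
    rw [e, abs_mul, abs_inv, abs_of_pos (mul_pos hx' hy'), inv_mul_le_iff₀ (mul_pos hx' hy')] at h
    linarith
  · intro x y hx hy
    calc ‖∑ i, x i * ∑ j, (G i j : ℂ) * y j‖ ≤ ∑ i, ‖x i‖ * ‖∑ j, (G i j : ℂ) * y j‖ :=
          (norm_sum_le _ _).trans_eq (by simp only [norm_mul])
      _ ≤ √(∑ i, ‖x i‖ ^ 2) * √(∑ i, ‖∑ j, (G i j : ℂ) * y j‖ ^ 2) :=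
          Real.sum_mul_le_sqrt_mul_sqrt _ _ _
      _ ≤ _ := by
          rw [hx, Real.sqrt_one, one_mul]
          exact Real.sqrt_le_sqrt ((hG2 y).trans_eq (by rw [hy, mul_one]))

/-- The lower estimate, with `A` and `u` both multiples of the same sign matrix. -/
theorem exists_large_projNorm {p : ℝ} {n : ℕ} [Fact (1 ≤ ENNReal.ofReal p)] (hp : 1 ≤ p) (hp2 : p < 2) (hn : 1 ≤ n) :
    ∃ (A : Ell p n →L[ℝ] (Ell p n →L[ℝ] ℝ))
      (u : (Ell p n →L[ℝ] ℝ) →L[ℝ] Ell p n), ‖A‖ ≤ 1 ∧ ‖u‖ ≤ 1 ∧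
      (√2 ^ (2 - 2 / p) * √2)⁻¹ * (n : ℝ) ^ (3 / 2 - 1 / p) ≤ projNorm (u.comp A.flip) := by
  have hn0 : (0 : ℝ) < n := by exact_mod_cast hn
  obtain ⟨G, hG, hG2⟩ := exists_sign_matrix n hn
  set a : ℝ := √(2 * n) ^ (2 - 2 / p) with ha
  set s : ℝ := 1 / p - 1 / 2 with hs
  set b : ℝ := (n : ℝ) ^ s * (√(2 * n) * (n : ℝ) ^ s) with hb
  have ha0 : 0 < a := by positivity
  have hb0 : 0 < b := by positivity
  let A₀ : Ell p n →ₗ[ℝ] Ell p n →ₗ[ℝ] ℝ :=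
    LinearMap.mk₂ ℝ (fun y x => a⁻¹ * ∑ i, x i * ∑ k, G i k * y k)
      (by intro y y' x; simp only [PiLp.add_apply, mul_add, Finset.sum_add_distrib])
      (by
        intro c y x
        simp only [PiLp.smul_apply, smul_eq_mul, Finset.mul_sum]
        exact Finset.sum_congr rfl fun i _ => Finset.sum_congr rfl fun j _ => by ring)
      (by intro y x x'; simp only [PiLp.add_apply, add_mul, mul_add, Finset.sum_add_distrib])
      (by
        intro c y x
        simp only [PiLp.smul_apply, smul_eq_mul, Finset.mul_sum]
        exact Finset.sum_congr rfl fun i _ => Finset.sum_congr rfl fun j _ => by ring)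
  have hA₀ : ∀ y x, ‖A₀ y x‖ ≤ 1 * ‖y‖ * ‖x‖ := by
    intro y x
    have h := interp_lp hp hp2 G hG hG2 x y
    rw [LinearMap.mk₂_apply, norm_mul, norm_inv, Real.norm_of_nonneg ha0.le,
      inv_mul_le_iff₀ ha0, Real.norm_eq_abs]
    linarith
  let u₀ : (Ell p n →L[ℝ] ℝ) →ₗ[ℝ] Ell p n :=
    { toFun := fun φ => WithLp.toLp _ fun i =>
        b⁻¹ * ∑ k, G i k * φ (PiLp.single (ENNReal.ofReal p) k 1)
      map_add' := by
        intro φ ψ; ext i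
        simp [mul_add, Finset.sum_add_distrib]
      map_smul' := by
        intro c φ; ext i
        simp only [smul_apply, smul_eq_mul, RingHom.id_apply,
          PiLp.smul_apply, Finset.mul_sum]
        exact Finset.sum_congr rfl fun j _ => by ring }
  have hu₀ : ∀ φ, ‖u₀ φ‖ ≤ 1 * ‖φ‖ := by
    intro φ
    have hφ := dual_l2_le hp hp2 φ
    have h1 := lp_le_l2 hp hp2 (u₀ φ)
    have h2 : ∑ i, (u₀ φ i) ^ 2 =
        (b⁻¹) ^ 2 * ∑ i, (∑ k, G i k * φ (PiLp.single (ENNReal.ofReal p) k 1)) ^ 2 := by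
      rw [Finset.mul_sum]
      exact Finset.sum_congr rfl fun i _ => by rw [← mul_pow]; rfl
    have h3 : ∑ i, (∑ k, G i k * φ (PiLp.single (ENNReal.ofReal p) k 1)) ^ 2 ≤
        2 * n * ∑ k, φ (PiLp.single (ENNReal.ofReal p) k 1) ^ 2 := by
      have := hG2 (fun k => (φ (PiLp.single (ENNReal.ofReal p) k 1) : ℂ))
      have e : ∀ i, ∑ k, (G i k : ℂ) * (φ (PiLp.single (ENNReal.ofReal p) k 1) : ℂ) =
          ((∑ k, G i k * φ (PiLp.single (ENNReal.ofReal p) k 1) : ℝ) : ℂ) := by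
        intro i; push_cast; rfl
      simpa only [e, Complex.norm_real, Real.norm_eq_abs, sq_abs] using this
    have h4 : √(∑ i, (u₀ φ i) ^ 2) ≤ b⁻¹ * (√(2 * n) * ((n : ℝ) ^ s * ‖φ‖)) := by
      rw [h2, Real.sqrt_mul (by positivity), Real.sqrt_sq (by positivity)]
      gcongr
      refine (Real.sqrt_le_sqrt h3).trans ?_
      rw [Real.sqrt_mul (by positivity)]
      gcongr
    refine h1.trans ((mul_le_mul_of_nonneg_left h4 (by positivity)).trans_eq ?_)
    change (n : ℝ) ^ s * _ = _
    rw [hb]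
    field_simp
  refine ⟨A₀.mkContinuous₂ 1 hA₀, u₀.mkContinuous 1 hu₀,
    LinearMap.mkContinuous₂_norm_le _ zero_le_one _,
    LinearMap.mkContinuous_norm_le _ zero_le_one _, le_trans (le_of_eq ?_) (trace_le_projNorm _)⟩
  have htr : ∀ i, ((u₀.mkContinuous 1 hu₀).comp (A₀.mkContinuous₂ 1 hA₀).flip)
      (PiLp.single (ENNReal.ofReal p) i 1) i = b⁻¹ * (a⁻¹ * n) := by
    intro i
    change b⁻¹ * ∑ k, G i k * (a⁻¹ * ∑ l, (PiLp.single (ENNReal.ofReal p) i 1 :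
      Ell p n) l * ∑ m, G l m *
        (PiLp.single (ENNReal.ofReal p) k 1 : Ell p n) m) = _
    have hsq : ∀ k, G i k * (a⁻¹ * G i k) = a⁻¹ := by
      intro k
      have : G i k * G i k = 1 := by rw [← abs_mul_abs_self, hG, one_mul]
      rw [mul_left_comm, this, mul_one]
    have hcol : ∀ l k, ∑ m, G l m * (PiLp.single (ENNReal.ofReal p) k 1 :
        Ell p n) m = G l k := by
      intro l k; simp
    have hrow : ∀ k, ∑ l, (PiLp.single (ENNReal.ofReal p) i 1 :
        Ell p n) l * G l k = G i k := by
      intro k; simp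
    simp only [hcol, hrow, hsq]
    simp [mul_comm]
  simp only [htr]
  rw [Finset.sum_const, Finset.card_univ, Fintype.card_fin, nsmul_eq_mul, hb, ha,
    Real.sqrt_mul (by norm_num), Real.mul_rpow (by positivity) (by positivity),
    Real.sqrt_eq_rpow (n : ℝ), ← Real.rpow_mul hn0.le]
  have hprod : (n : ℝ) ^ (3 / 2 - 1 / p) * ((n : ℝ) ^ s * ((n : ℝ) ^ (1 / 2 : ℝ) * (n : ℝ) ^ s) *
      (n : ℝ) ^ (1 / 2 * (2 - 2 / p))) = n * n := by
    rw [← Real.rpow_add hn0, ← Real.rpow_add hn0, ← Real.rpow_add hn0, ← Real.rpow_add hn0,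
      ← sq, ← Real.rpow_two]
    congr 1; rw [hs]; ring
  have h2 : (0 : ℝ) < √2 ^ (2 - 2 / p) := by positivity
  have h3 : (0 : ℝ) < (n : ℝ) ^ s := by positivity
  have h4 : (0 : ℝ) < (n : ℝ) ^ (1 / 2 : ℝ) := by positivity
  have h5 : (0 : ℝ) < (n : ℝ) ^ (1 / 2 * (2 - 2 / p)) := by positivity
  generalize √2 ^ (2 - 2 / p) = X at *
  generalize (n : ℝ) ^ s = N₁ at *
  generalize (n : ℝ) ^ (1 / 2 * (2 - 2 / p)) = N₂ at *
  generalize (n : ℝ) ^ (1 / 2 : ℝ) = N₃ at *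
  generalize (n : ℝ) ^ (3 / 2 - 1 / p) = N₄ at *
  field_simp
  linarith

/-- For `1 ≤ p < 2` there are constants `c, C > 0` depending only on `p` with
`c·n^{3/2 - 1/p} ≤ K_G(ℓ_pⁿ, ℓ_pⁿ) ≤ C·n^{3/2 - 1/p}`. -/
theorem statement15 (p : ℝ) (hp1 : 1 ≤ p) (hp2 : p < 2)
    [Fact (1 ≤ ENNReal.ofReal p)] :
    ∃ c > (0:ℝ), ∃ C > (0:ℝ), ∀ n : ℕ, 1 ≤ n →
      c * (n : ℝ) ^ (3/2 - 1/p) ≤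
        KG (PiLp (ENNReal.ofReal p) fun _ : Fin n => ℝ)
          (PiLp (ENNReal.ofReal p) fun _ : Fin n => ℝ) ∧
      KG (PiLp (ENNReal.ofReal p) fun _ : Fin n => ℝ)
          (PiLp (ENNReal.ofReal p) fun _ : Fin n => ℝ) ≤
        C * (n : ℝ) ^ (3/2 - 1/p) := by
  refine ⟨(√2 ^ (2 - 2 / p) * √2)⁻¹, by positivity, 3, by norm_num, fun n hn => ?_⟩
  obtain ⟨A, u, hA, hu, hlow⟩ := exists_large_projNorm (n := n) hp1 hp2 hn
  constructor
  · refine hlow.trans (le_csSup ⟨3 * (n : ℝ) ^ (3 / 2 - 1 / p), ?_⟩ ⟨A, u, hA, hu, rfl⟩)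
    rintro _ ⟨A, u, hA, hu, rfl⟩
    exact projNorm_comp_le hp1 hp2 hn A u hA hu
  · refine csSup_le ⟨_, A, u, hA, hu, rfl⟩ ?_
    rintro _ ⟨A, u, hA, hu, rfl⟩
    exact projNorm_comp_le hp1 hp2 hn A u hA hu
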